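/- Let m ∈ {3, 5, 6} and let f: F_2^m → F_2 be any Boolean function of algebraic degree exactly 2 with zero constant term in its ANF such that, for every n with m ≤ n ≤ 20, the function f*: F_2^n → F_2 given by the CA-based construction is semi-bent and balanced. Then for every n with m ≤ n ≤ 20, the number of nonzero linear structures of f* equals 1 if n is odd and 3 if n is even. -/

import Mathlib

/-- The CA-based construction: given a local rule `f` of `m` variables and `n ≥ m`,
the `n`-variable function `f*` is the XOR of all output cells of the no-boundary CA. -/
def caStar (m n : ℕ) (h : m ≤ n) (f : (Fin m → ZMod 2) → ZMod 2) :
    (Fin n → ZMod 2) → ZMod 2 :=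
  fun x => ∑ i : Fin (n - m + 1),
    f (fun j => x ⟨i.val + j.val, by have hi := i.isLt; have hj := j.isLt; omega⟩)

/-- The ANF coefficient `a_I` of a Boolean function, via the Möbius transform:
`a_I = ⊕_{x : supp(x) ⊆ I} f(x)`. -/
def anf {n : ℕ} (f : (Fin n → ZMod 2) → ZMod 2) (I : Finset (Fin n)) : ZMod 2 :=
  ∑ x ∈ Finset.univ.filter (fun x : Fin n → ZMod 2 => ∀ i, x i = 1 → i ∈ I), f x

/-- The algebraic degree of a Boolean function: `max {|I| : a_I ≠ 0}` (0 for the zero function). -/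
def algDegree {n : ℕ} (f : (Fin n → ZMod 2) → ZMod 2) : ℕ :=
  (Finset.univ.filter fun I : Finset (Fin n) => anf f I ≠ 0).sup Finset.card

/-- The Walsh transform `W_f(a) = Σ_x (-1)^(f(x) ⊕ a·x)`. -/
def walsh {n : ℕ} (f : (Fin n → ZMod 2) → ZMod 2) (a : Fin n → ZMod 2) : ℤ :=
  ∑ x : Fin n → ZMod 2, (-1 : ℤ) ^ (f x + ∑ i, a i * x i).val

/-- The semi-bent value `λ`: `2^((n+1)/2)` for odd `n`, `2^((n+2)/2)` for even `n`. -/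
def sbLambda (n : ℕ) : ℤ := if Odd n then 2 ^ ((n + 1) / 2) else 2 ^ ((n + 2) / 2)

/-- A Boolean function is semi-bent if its Walsh transform takes only the values `0, λ, -λ`. -/
def semiBent {n : ℕ} (f : (Fin n → ZMod 2) → ZMod 2) : Prop :=
  ∀ a, walsh f a = 0 ∨ walsh f a = sbLambda n ∨ walsh f a = -sbLambda n

/-- A Boolean function is balanced if it takes the value 1 exactly `2^(n-1)` times. -/
def balanced {n : ℕ} (f : (Fin n → ZMod 2) → ZMod 2) : Prop :=
  (Finset.univ.filter fun x => f x = 1).card = 2 ^ (n - 1)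

/-- `b` is a linear structure of `g` if the derivative `D_b g(x) = g(x) ⊕ g(x ⊕ b)` is constant. -/
def isLinearStructure {n : ℕ} (g : (Fin n → ZMod 2) → ZMod 2)
    (b : Fin n → ZMod 2) : Prop :=
  (∀ x, g x + g (x + b) = 0) ∨ (∀ x, g x + g (x + b) = 1)

def chi (z : ZMod 2) : ℤ := (-1 : ℤ) ^ z.val

lemma chi_add : ∀ a b : ZMod 2, chi (a + b) = chi a * chi b := by decide

lemma chi_zero : chi 0 = 1 := by decide

lemma chi_sq : ∀ a : ZMod 2, chi a ^ 2 = 1 := by decide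

lemma chi_succ : ∀ a : ZMod 2, chi (a + 1) = - chi a := by decide

def dotp {n : ℕ} (a x : Fin n → ZMod 2) : ZMod 2 := ∑ i, a i * x i

lemma dotp_add {n : ℕ} (a x y : Fin n → ZMod 2) : dotp a (x + y) = dotp a x + dotp a y := by
  simp [dotp, mul_add, Finset.sum_add_distrib]

lemma dotp_add_left {n : ℕ} (a x y : Fin n → ZMod 2) :
    dotp (x + y) a = dotp x a + dotp y a := by
  simp [dotp, add_mul, Finset.sum_add_distrib]

lemma add_self_fun {n : ℕ} (x : Fin n → ZMod 2) : x + x = 0 := by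
  funext i; exact CharTwo.add_self_eq_zero _

lemma sum_chi_zero {n : ℕ} (h : (Fin n → ZMod 2) → ZMod 2) (y : Fin n → ZMod 2)
    (hy : ∀ x, h (x + y) = h x + 1) : ∑ x, chi (h x) = 0 := by
  have h1 : ∑ x, chi (h x) = ∑ x, chi (h (x + y)) :=
    (Equiv.sum_comp (Equiv.addRight y) (fun x => chi (h x))).symm
  have h2 : ∑ x, chi (h (x + y)) = - ∑ x, chi (h x) := by
    rw [← Finset.sum_neg_distrib]
    exact Finset.sum_congr rfl fun x _ => by rw [hy, chi_succ]
  linarith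

lemma card_cube (n : ℕ) : (Fintype.card (Fin n → ZMod 2)) = 2 ^ n := by
  simp [ZMod.card]

lemma sum_dotp {n : ℕ} (c : Fin n → ZMod 2) :
    ∑ a : Fin n → ZMod 2, chi (dotp a c) = if c = 0 then (2 : ℤ) ^ n else 0 := by
  split_ifs with h
  · subst h
    simp [dotp, chi_zero, ZMod.card]
  · obtain ⟨i, hi⟩ : ∃ i, c i ≠ 0 := by
      by_contra hh
      push Not at hh
      exact h (funext hh)
    have hi1 : c i = 1 := by
      have : ∀ z : ZMod 2, z ≠ 0 → z = 1 := by decide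
      exact this _ hi
    apply sum_chi_zero _ (Pi.single i 1)
    intro x
    rw [dotp_add_left]
    congr 1
    simp [dotp, Pi.single_apply, hi1]

def rr {n : ℕ} (g : (Fin n → ZMod 2) → ZMod 2) (b : Fin n → ZMod 2) : ℤ :=
  ∑ x, chi (g x + g (x + b))

lemma walsh_sq {n : ℕ} (g : (Fin n → ZMod 2) → ZMod 2) (a : Fin n → ZMod 2) :
    walsh g a ^ 2 = ∑ b, chi (dotp a b) * rr g b := by
  have hw : walsh g a = ∑ x, chi (g x + dotp a x) := rfl
  rw [hw, sq, Finset.sum_mul_sum]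
  simp only [rr, Finset.mul_sum]
  rw [Finset.sum_comm (s := Finset.univ) (t := Finset.univ)
    (f := fun b x => chi (dotp a b) * chi (g x + g (x + b)))]
  refine Finset.sum_congr rfl fun x _ => ?_
  rw [← Equiv.sum_comp (Equiv.addLeft x) (fun y => chi (g x + dotp a x) * chi (g y + dotp a y))]
  refine Finset.sum_congr rfl fun b _ => ?_
  simp only [Equiv.coe_addLeft, dotp_add, chi_add]
  have := chi_sq (dotp a x)
  linear_combination (chi (g x) * chi (g (x + b)) * chi (dotp a b)) * this

lemma sum_walsh_sq {n : ℕ} (g : (Fin n → ZMod 2) → ZMod 2) :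
    ∑ a, walsh g a ^ 2 = 2 ^ n * 2 ^ n := by
  simp only [walsh_sq]
  rw [Finset.sum_comm]
  simp only [← Finset.sum_mul, sum_dotp]
  simp [rr, CharTwo.add_self_eq_zero, chi_zero, ZMod.card]

lemma add_eq_zero_fun {n : ℕ} (x y : Fin n → ZMod 2) : x + y = 0 ↔ x = y := by
  constructor
  · intro h
    have : x + y + y = y := by rw [h, zero_add]
    rwa [add_assoc, add_self_fun, add_zero] at this
  · rintro rfl; exact add_self_fun x

lemma sum_walsh_four {n : ℕ} (g : (Fin n → ZMod 2) → ZMod 2) :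
    ∑ a, (walsh g a ^ 2) ^ 2 = 2 ^ n * ∑ b, rr g b ^ 2 := by
  have h1 : ∀ a, (walsh g a ^ 2) ^ 2 =
      ∑ b, ∑ c, chi (dotp a (b + c)) * (rr g b * rr g c) := by
    intro a
    rw [walsh_sq, sq, Finset.sum_mul_sum]
    refine Finset.sum_congr rfl fun b _ => Finset.sum_congr rfl fun c _ => ?_
    rw [dotp_add, chi_add]; ring
  simp only [h1]
  rw [Finset.sum_comm, Finset.mul_sum]
  refine Finset.sum_congr rfl fun b _ => ?_
  rw [Finset.sum_comm]
  simp only [← Finset.sum_mul, sum_dotp, add_eq_zero_fun]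
  simp [sq]

def Quad {n : ℕ} (g : (Fin n → ZMod 2) → ZMod 2) : Prop :=
  ∀ x a b c, g x + g (x + a) + g (x + b) + g (x + c) + g (x + a + b) + g (x + a + c)
    + g (x + b + c) + g (x + a + b + c) = 0

lemma rr_sq {n : ℕ} (g : (Fin n → ZMod 2) → ZMod 2) (hg : Quad g) (b : Fin n → ZMod 2)
    [Decidable (isLinearStructure g b)] :
    rr g b ^ 2 = if isLinearStructure g b then 2 ^ n * 2 ^ n else 0 := by
  split_ifs with h
  · rcases h with h | h
    · simp [rr, h, chi_zero, ZMod.card, sq]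
    · have : chi 1 = -1 := by decide
      simp [rr, h, this, ZMod.card, sq]
  · have : ∃ y, g y + g (y + b) ≠ g 0 + g (0 + b) := by
      by_contra hh
      push Not at hh
      apply h
      have : ∀ z : ZMod 2, z = 0 ∨ z = 1 := by decide
      rcases this (g 0 + g (0 + b)) with h0 | h0
      · left; intro x; rw [hh, h0]
      · right; intro x; rw [hh, h0]
    obtain ⟨y, hy⟩ := this
    have : rr g b = 0 := by
      apply sum_chi_zero _ y
      intro x
      have := hg 0 x y b
      simp only [zero_add] at this hy ⊢
      revert this hy
      generalize g 0 = z0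
      generalize g x = z1
      generalize g y = z2
      generalize g b = z3
      generalize g (x + y) = z4
      generalize g (x + b) = z5
      generalize g (y + b) = z6
      generalize g (x + y + b) = z7
      revert z0 z1 z2 z3 z4 z5 z6 z7
      decide
    simp [this]

lemma main_count {n : ℕ} (g : (Fin n → ZMod 2) → ZMod 2) (hg : Quad g) (hs : semiBent g) :
    sbLambda n ^ 2 = 2 ^ n * (Nat.card {b // isLinearStructure g b} : ℤ) := by
  classical
  have h1 : ∑ a, (walsh g a ^ 2) ^ 2 = sbLambda n ^ 2 * (2 ^ n * 2 ^ n) := by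
    rw [← sum_walsh_sq g, Finset.mul_sum]
    refine Finset.sum_congr rfl fun a _ => ?_
    rcases hs a with h | h | h <;> rw [h] <;> ring
  rw [sum_walsh_four] at h1
  simp only [rr_sq g hg] at h1
  rw [← Finset.sum_filter, Finset.sum_const, nsmul_eq_mul, ← Fintype.card_subtype,
    ← Nat.card_eq_fintype_card] at h1
  have h2 : (2 : ℤ) ^ n * 2 ^ n ≠ 0 := by positivity
  apply mul_right_cancel₀ h2
  rw [← h1]; ring

lemma isLS_zero {n : ℕ} (g : (Fin n → ZMod 2) → ZMod 2) : isLinearStructure g 0 := by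
  left; intro x; rw [add_zero]; exact CharTwo.add_self_eq_zero _

lemma card_ne {n : ℕ} (g : (Fin n → ZMod 2) → ZMod 2) :
    Nat.card {b // isLinearStructure g b} = Nat.card {b // b ≠ 0 ∧ isLinearStructure g b} + 1 := by
  classical
  rw [Nat.card_eq_fintype_card, Nat.card_eq_fintype_card, Fintype.card_subtype,
    Fintype.card_subtype]
  have : (Finset.univ.filter fun b => isLinearStructure g b) =
      insert 0 (Finset.univ.filter fun b => b ≠ 0 ∧ isLinearStructure g b) := by
    ext b
    by_cases hb : b = 0
    · simp [hb, isLS_zero]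
    · simp [hb]
  rw [this, Finset.card_insert_of_notMem (by simp)]

lemma count_final {n : ℕ} (g : (Fin n → ZMod 2) → ZMod 2) (hg : Quad g) (hs : semiBent g) :
    Nat.card {b // b ≠ 0 ∧ isLinearStructure g b} = if Odd n then 1 else 3 := by
  have h := main_count g hg hs
  rw [card_ne] at h
  have h2 : (2 : ℤ) ^ n ≠ 0 := by positivity
  unfold sbLambda at h
  split_ifs at h ⊢ with ho
  · obtain ⟨k, rfl⟩ := ho
    have e : (2 * k + 1 + 1) / 2 = k + 1 := by omega
    rw [e] at h
    have : (2 : ℤ) ^ (2 * k + 1) * 2 = 2 ^ (2 * k + 1) *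
      ((Nat.card {b // b ≠ 0 ∧ isLinearStructure g b} + 1 : ℕ) : ℤ) := by
      rw [← h]; ring
    have := mul_left_cancel₀ h2 this
    omega
  · obtain ⟨k, rfl⟩ := Nat.not_odd_iff_even.mp ho
    have e : (k + k + 2) / 2 = k + 1 := by omega
    rw [e] at h
    have : (2 : ℤ) ^ (k + k) * 4 = 2 ^ (k + k) *
      ((Nat.card {b // b ≠ 0 ∧ isLinearStructure g b} + 1 : ℕ) : ℤ) := by
      rw [← h]; ring
    have := mul_left_cancel₀ h2 this
    omega

def supp {n : ℕ} (x : Fin n → ZMod 2) : Finset (Fin n) := Finset.univ.filter fun i => x i = 1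

lemma supp_inj {n : ℕ} {x y : Fin n → ZMod 2} (h : supp x = supp y) : x = y := by
  funext i
  have : x i = 1 ↔ y i = 1 := by
    have := Finset.ext_iff.mp h i
    simpa [supp] using this
  revert this
  generalize x i = u
  generalize y i = v
  revert u v
  decide

lemma mobius {n : ℕ} (f : (Fin n → ZMod 2) → ZMod 2) (x : Fin n → ZMod 2) :
    f x = ∑ I ∈ (supp x).powerset, anf f I := by
  classical
  have h0 : ∀ I, anf f I = ∑ y, if supp y ⊆ I then f y else 0 := by
    intro I
    rw [anf, Finset.sum_filter]
    refine Finset.sum_congr rfl fun y _ => ?_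
    have : (∀ i, y i = 1 → i ∈ I) ↔ supp y ⊆ I := by
      simp [supp, Finset.subset_iff]
    simp only [this]
  simp only [h0]
  rw [Finset.sum_comm, Finset.sum_eq_single x]
  · rw [Finset.sum_eq_single (supp x)]
    · simp
    · intro I hI hne
      rw [if_neg]
      intro h
      exact hne (Finset.Subset.antisymm (Finset.mem_powerset.mp hI) h)
    · simp
  · intro y _ hne
    rw [← Finset.sum_filter, Finset.sum_const, nsmul_eq_mul]
    have : ((supp x).powerset.filter fun I => supp y ⊆ I) = Finset.Icc (supp y) (supp x) := by
      ext I; simp [and_comm]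
    rw [this]
    by_cases hs : supp y ⊆ supp x
    · rw [Finset.card_Icc_finset hs]
      have hlt : (supp y).card < (supp x).card := by
        apply Finset.card_lt_card
        refine Finset.ssubset_iff_subset_ne.mpr ⟨hs, fun h => hne (supp_inj h)⟩
      obtain ⟨k, hk⟩ : ∃ k, (supp x).card - (supp y).card = k + 1 :=
        ⟨(supp x).card - (supp y).card - 1, by omega⟩
      rw [hk, pow_succ]
      have : (2 : ZMod 2) = 0 := by decide
      push_cast
      rw [this]; simp
    · rw [Finset.Icc_eq_empty (by simpa using hs)]; simp
  · simp

lemma Quad.sum {n : ℕ} {ι : Type*} (s : Finset ι) (g : ι → (Fin n → ZMod 2) → ZMod 2)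
    (h : ∀ i ∈ s, Quad (g i)) : Quad (fun x => ∑ i ∈ s, g i x) := by
  intro x a b c
  simp only [← Finset.sum_add_distrib]
  exact Finset.sum_eq_zero fun i hi => h i hi x a b c

lemma quad_mono {n : ℕ} (I : Finset (Fin n)) (hI : I.card ≤ 2) (z : ZMod 2) :
    Quad (fun x => z * ∏ i ∈ I, x i) := by
  classical
  intro x a b c
  have h2 : (2 : ZMod 2) = 0 := by decide
  have : I.card = 0 ∨ I.card = 1 ∨ I.card = 2 := by omega
  rcases this with h | h | h
  · rw [Finset.card_eq_zero] at h
    subst h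
    simp only [Finset.prod_empty]
    linear_combination (4 * z) * h2
  · obtain ⟨i, rfl⟩ := Finset.card_eq_one.mp h
    simp only [Finset.prod_singleton, Pi.add_apply]
    linear_combination (z * (4 * x i + 2 * a i + 2 * b i + 2 * c i)) * h2
  · obtain ⟨i, j, hij, rfl⟩ := Finset.card_eq_two.mp h
    simp only [Finset.prod_pair hij, Pi.add_apply]
    generalize x i = x1
    generalize x j = x2
    generalize a i = a1
    generalize a j = a2
    generalize b i = b1
    generalize b j = b2
    generalize c i = c1
    generalize c j = c2
    linear_combination (z * (4 * x1 * x2 + 2 * x1 * (a2 + b2 + c2) + 2 * x2 * (a1 + b1 + c1)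
      + 2 * (a1 * a2 + b1 * b2 + c1 * c2)
      + (a1 * b2 + a2 * b1 + a1 * c2 + a2 * c1 + b1 * c2 + b2 * c1))) * h2

lemma quad_of_deg {n : ℕ} (f : (Fin n → ZMod 2) → ZMod 2) (hdeg : algDegree f = 2) : Quad f := by
  classical
  have : f = fun x => ∑ I, anf f I * ∏ i ∈ I, x i := by
    funext x
    rw [mobius f x]
    have hp : ∀ I : Finset (Fin n), ∏ i ∈ I, x i = if I ⊆ supp x then 1 else 0 := by
      intro I
      split_ifs with h
      · refine Finset.prod_eq_one fun i hi => ?_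
        simpa [supp] using h hi
      · obtain ⟨i, hi, hn⟩ := Finset.not_subset.mp h
        refine Finset.prod_eq_zero hi ?_
        have h1 : x i ≠ 1 := by simpa [supp] using hn
        have : ∀ z : ZMod 2, z ≠ 1 → z = 0 := by decide
        exact this _ h1
    simp only [hp, mul_ite, mul_one, mul_zero]
    rw [← Finset.sum_filter]
    refine Finset.sum_congr ?_ fun _ _ => rfl
    ext I; simp
  rw [this]
  apply Quad.sum
  intro I _
  by_cases h : anf f I = 0
  · intro x a b c; simp [h]
  · apply quad_mono
    rw [← hdeg]
    exact Finset.le_sup (f := Finset.card) (by simp [h])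

lemma quad_ca {m n : ℕ} (h : m ≤ n) (f : (Fin m → ZMod 2) → ZMod 2) (hf : Quad f) :
    Quad (caStar m n h f) := by
  unfold caStar
  apply Quad.sum
  intro i _ x a b c
  exact hf _ _ _ _

/-- for `m ∈ {3,5,6}`, every quadratic `m`-variable rule (zero constant
term) whose CA-based construction yields semi-bent balanced functions for all
`m ≤ n ≤ 20` has exactly 1 nonzero linear structure when `n` is odd and 3 when `n`
is even, for all `m ≤ n ≤ 20`. -/
theorem quadratic_linear_structures (m : ℕ) (hm : m = 3 ∨ m = 5 ∨ m = 6)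
    (f : (Fin m → ZMod 2) → ZMod 2)
    (hdeg : algDegree f = 2) (hconst : anf f ∅ = 0)
    (hgood : ∀ n (h : m ≤ n), n ≤ 20 →
      semiBent (caStar m n h f) ∧ balanced (caStar m n h f)) :
    ∀ n (h : m ≤ n), n ≤ 20 →
      Nat.card {b : Fin n → ZMod 2 //
        b ≠ 0 ∧ isLinearStructure (caStar m n h f) b} =
      if Odd n then 1 else 3 := by
  intro n h hn
  exact count_final _ (quad_ca h f (quad_of_deg f hdeg)) (hgood n h hn).1
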